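/- Let A(a|x) for a, x ∈ {0,1} be rank-one orthogonal projections on ℂ² with A(0|x) + A(1|x) = I₂ for each x, and let B(b|y) for b, y ∈ {0,1} be rank-one orthogonal projections on ℂ² with B(0|y) + B(1|y) = I₂ for each y. Define the 4×4 Hermitian matrix H = (1/4) Σ_{a,b,x,y ∈ {0,1}} [a + b + x·y ≡ 0 (mod 2)] · A(a|x) ⊗ B(b|y), where [·] is 1 if the congruence holds and 0 otherwise and ⊗ is the Kronecker product. Then there exists θ ∈ [3/4, (2+√2)/4] such that the eigenvalues of H, counted with multiplicity, are exactly θ, 1 − θ, 1/2 + (√2/4)·√(8θ(1−θ) − 1), and 1/2 − (√2/4)·√(8θ(1−θ) − 1). -/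

import Mathlib

open Matrix Kronecker Polynomial

/-- The 2×2 Hermitian matrix with Bloch vector `(x,y,z)`. -/
noncomputable def blochObs (x y z : ℂ) : Matrix (Fin 2) (Fin 2) ℂ :=
  !![z, x - Complex.I * y; x + Complex.I * y, -z]

lemma det_zero_of_rank_one (P : Matrix (Fin 2) (Fin 2) ℂ) (h : P.rank = 1) : P.det = 0 := by
  by_contra hd
  have hu : IsUnit P := (Matrix.isUnit_iff_isUnit_det P).2 (isUnit_iff_ne_zero.2 hd)
  have := Matrix.rank_of_isUnit P hu
  simp [h] at this

lemma exists_bloch (P Q : Matrix (Fin 2) (Fin 2) ℂ) (hP : P.IsHermitian)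
    (h1 : P.rank = 1) (h2 : Q.rank = 1) (hs : P + Q = 1) :
    ∃ x y z : ℝ, x ^ 2 + y ^ 2 + z ^ 2 = 1 ∧
      P = (1 / 2 : ℂ) • (1 + blochObs x y z) ∧ Q = (1 / 2 : ℂ) • (1 - blochObs x y z) := by
  have d1 := det_zero_of_rank_one P h1
  have d2 := det_zero_of_rank_one Q h2
  obtain rfl : Q = 1 - P := by rw [← hs]; simp
  rw [Matrix.det_fin_two] at d1 d2
  simp at d2
  have e00 := hP.apply 0 0
  have e11 := hP.apply 1 1
  have e10 := hP.apply 1 0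
  have htr : P 1 1 = 1 - P 0 0 := by linear_combination d1 - d2
  generalize hp : P 0 0 = p at *
  generalize hq : P 0 1 = q at *
  generalize hr : P 1 0 = r at *
  rw [htr] at d1 d2
  obtain ⟨p1, p2⟩ := p
  obtain ⟨q1, q2⟩ := q
  obtain ⟨r1, r2⟩ := r
  simp [Complex.ext_iff] at e00 e10 d1
  obtain ⟨e1, e2⟩ := e10
  have hp2 : p2 = 0 := by linarith
  subst hp2
  have hr2 : r2 = -q2 := by linarith
  subst hr2 e1
  have key : P = (1 / 2 : ℂ) • (1 + blochObs ((2 * q1 : ℝ)) ((-2 * q2 : ℝ)) ((2 * p1 - 1 : ℝ))) := by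
    ext i j
    fin_cases i <;> fin_cases j <;>
      simp [blochObs, hp, hq, hr, htr, Complex.ext_iff] <;> ring_nf
  refine ⟨2 * q1, -2 * q2, 2 * p1 - 1, ?_, key, ?_⟩
  · nlinarith [d1.1]
  · rw [key]
    module

/-- characteristic polynomial of a general two-qubit correlation operator -/
lemma det_corr (μ t11 t12 t13 t21 t22 t23 t31 t32 t33 i : ℂ) (hi : i ^ 2 = -1) :
    (!![μ - t33, -(t31 - i * t32), -(t13 - i * t23), -(t11 - i * t12 - i * t21 - t22);
       -(t31 + i * t32), μ + t33, -(t11 + i * t12 - i * t21 + t22), (t13 - i * t23);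
       -(t13 + i * t23), -(t11 - i * t12 + i * t21 + t22), μ + t33, (t31 - i * t32);
       -(t11 + i * t12 + i * t21 - t22), (t13 + i * t23), (t31 + i * t32), μ - t33] :
       Matrix (Fin 4) (Fin 4) ℂ).det =
    μ ^ 4 - 2 * (t11^2+t12^2+t13^2+t21^2+t22^2+t23^2+t31^2+t32^2+t33^2) * μ ^ 2
      + 8 * (t11*(t22*t33-t23*t32) - t12*(t21*t33-t23*t31) + t13*(t21*t32-t22*t31)) * μ
      + (t11^2+t12^2+t13^2+t21^2+t22^2+t23^2+t31^2+t32^2+t33^2)^2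
      - 4 * ((t22*t33-t23*t32)^2 + (t21*t33-t23*t31)^2 + (t21*t32-t22*t31)^2
        + (t12*t33-t13*t32)^2 + (t11*t33-t13*t31)^2 + (t11*t32-t12*t31)^2
        + (t12*t23-t13*t22)^2 + (t11*t23-t13*t21)^2 + (t11*t22-t12*t21)^2) := by
  have h3 : i ^ 3 = -i := by linear_combination i * hi
  have h4 : i ^ 4 = 1 := by linear_combination (i ^ 2 - 1) * hi
  simp [Matrix.det_succ_row_zero, Fin.sum_univ_succ, Fin.succAbove]
  ring_nf
  simp only [hi, h3, h4]
  ring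

lemma det_chsh (μ a1 a2 a3 c1 c2 c3 b1 b2 b3 d1 d2 d3 : ℂ)
    (ha : a1^2+a2^2+a3^2 = 1) (hc : c1^2+c2^2+c3^2 = 1)
    (hb : b1^2+b2^2+b3^2 = 1) (hd : d1^2+d2^2+d3^2 = 1) :
    (Matrix.scalar (Fin 2 × Fin 2) μ - (blochObs a1 a2 a3 ⊗ₖ blochObs (b1+d1) (b2+d2) (b3+d3)
      + blochObs c1 c2 c3 ⊗ₖ blochObs (b1-d1) (b2-d2) (b3-d3))).det =
    μ ^ 4 - 8 * μ ^ 2 + 16 - 16 * (((a2*c3-a3*c2)^2 + (a3*c1-a1*c3)^2 + (a1*c2-a2*c1)^2) *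
      ((b2*d3-b3*d2)^2 + (b3*d1-b1*d3)^2 + (b1*d2-b2*d1)^2)) := by
  have hT : (a1*(b1+d1)+c1*(b1-d1))^2+(a1*(b2+d2)+c1*(b2-d2))^2+(a1*(b3+d3)+c1*(b3-d3))^2
     + (a2*(b1+d1)+c2*(b1-d1))^2+(a2*(b2+d2)+c2*(b2-d2))^2+(a2*(b3+d3)+c2*(b3-d3))^2
     + (a3*(b1+d1)+c3*(b1-d1))^2+(a3*(b2+d2)+c3*(b2-d2))^2+(a3*(b3+d3)+c3*(b3-d3))^2 = 4 := by
    have e1 : (b1+d1)^2+(b2+d2)^2+(b3+d3)^2 = 4 - ((b1-d1)^2+(b2-d2)^2+(b3-d3)^2) := by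
      linear_combination 2 * hb + 2 * hd
    linear_combination ((b1+d1)^2+(b2+d2)^2+(b3+d3)^2) * ha
      + ((b1-d1)^2+(b2-d2)^2+(b3-d3)^2) * hc + e1 + 2 * (a1*c1+a2*c2+a3*c3) * (hb - hd)
  have := det_corr μ (a1*(b1+d1)+c1*(b1-d1)) (a1*(b2+d2)+c1*(b2-d2)) (a1*(b3+d3)+c1*(b3-d3))
    (a2*(b1+d1)+c2*(b1-d1)) (a2*(b2+d2)+c2*(b2-d2)) (a2*(b3+d3)+c2*(b3-d3))
    (a3*(b1+d1)+c3*(b1-d1)) (a3*(b2+d2)+c3*(b2-d2)) (a3*(b3+d3)+c3*(b3-d3)) Complex.I Complex.I_sq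
  rw [hT] at this
  rw [← Matrix.det_reindex_self finProdFinEquiv]
  refine Eq.trans ?_ (this.trans ?_)
  · congr 1
    have s0 : (finProdFinEquiv (m := 2) (n := 2)).symm 0 = (0, 0) := by decide
    have s1 : (finProdFinEquiv (m := 2) (n := 2)).symm 1 = (0, 1) := by decide
    have s2 : (finProdFinEquiv (m := 2) (n := 2)).symm 2 = (1, 0) := by decide
    have s3 : (finProdFinEquiv (m := 2) (n := 2)).symm 3 = (1, 1) := by decide
    have hI := Complex.I_sq
    ext i j
    change (Matrix.scalar (Fin 2 × Fin 2) μ - (blochObs a1 a2 a3 ⊗ₖ blochObs (b1+d1) (b2+d2) (b3+d3)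
      + blochObs c1 c2 c3 ⊗ₖ blochObs (b1-d1) (b2-d2) (b3-d3)))
      ((finProdFinEquiv (m := 2) (n := 2)).symm i) ((finProdFinEquiv (m := 2) (n := 2)).symm j) = _
    fin_cases i <;> fin_cases j <;>
      simp [s0, s1, s2, s3, blochObs, Matrix.scalar_apply, Matrix.diagonal_apply] <;> ring_nf <;>
      (try simp only [hI]) <;> ring
  · ring

lemma cross_bound (a1 a2 a3 c1 c2 c3 : ℝ)
    (ha : a1^2+a2^2+a3^2 = 1) (hc : c1^2+c2^2+c3^2 = 1) :
    (a2*c3-a3*c2)^2 + (a3*c1-a1*c3)^2 + (a1*c2-a2*c1)^2 ≤ 1 := by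
  have : (a2*c3-a3*c2)^2 + (a3*c1-a1*c3)^2 + (a1*c2-a2*c1)^2 = 1 - (a1*c1+a2*c2+a3*c3)^2 := by
    linear_combination (c1^2+c2^2+c3^2) * ha + hc
  nlinarith [sq_nonneg (a1*c1+a2*c2+a3*c3)]

lemma blochObs_add (x y z x' y' z' : ℂ) :
    blochObs (x + x') (y + y') (z + z') = blochObs x y z + blochObs x' y' z' := by
  ext i j
  fin_cases i <;> fin_cases j <;> simp [blochObs] <;> ring

lemma blochObs_sub (x y z x' y' z' : ℂ) :
    blochObs (x - x') (y - y') (z - z') = blochObs x y z - blochObs x' y' z' := by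
  ext i j
  fin_cases i <;> fin_cases j <;> simp [blochObs] <;> ring

/-- For rank-one orthogonal projections `A(a|x)`, `B(b|y)` on ℂ² with
`A(0|x) + A(1|x) = I` and `B(0|y) + B(1|y) = I`, the CHSH-game operator
`H = (1/4) Σ_{a+b+xy ≡ 0 (2)} A(a|x) ⊗ B(b|y)` has eigenvalues (with multiplicity)
`θ, 1-θ, 1/2 ± (√2/4)√(8θ(1-θ)-1)` for some `θ ∈ [3/4, (2+√2)/4]`, expressed via its
characteristic polynomial. -/
theorem stmt_13 (A B : ZMod 2 → ZMod 2 → Matrix (Fin 2) (Fin 2) ℂ)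
    (hAherm : ∀ a x, (A a x).IsHermitian)
    (hAproj : ∀ a x, A a x * A a x = A a x)
    (hArank : ∀ a x, (A a x).rank = 1)
    (hAsum : ∀ x, A 0 x + A 1 x = 1)
    (hBherm : ∀ b y, (B b y).IsHermitian)
    (hBproj : ∀ b y, B b y * B b y = B b y)
    (hBrank : ∀ b y, (B b y).rank = 1)
    (hBsum : ∀ y, B 0 y + B 1 y = 1)
    (H : Matrix (Fin 2 × Fin 2) (Fin 2 × Fin 2) ℂ)
    (hH : H = (1 / 4 : ℂ) • ∑ a : ZMod 2, ∑ b : ZMod 2, ∑ x : ZMod 2, ∑ y : ZMod 2,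
      if a + b + x * y = 0 then A a x ⊗ₖ B b y else 0) :
    ∃ θ ∈ Set.Icc (3 / 4 : ℝ) ((2 + Real.sqrt 2) / 4),
      H.charpoly =
        (X - C (θ : ℂ)) * (X - C ((1 - θ : ℝ) : ℂ)) *
        (X - C ((1 / 2 + (Real.sqrt 2 / 4) * Real.sqrt (8 * θ * (1 - θ) - 1) : ℝ) : ℂ)) *
        (X - C ((1 / 2 - (Real.sqrt 2 / 4) * Real.sqrt (8 * θ * (1 - θ) - 1) : ℝ) : ℂ)) := by
  obtain ⟨a1, a2, a3, ha, hA0, hA0'⟩ :=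
    exists_bloch _ _ (hAherm 0 0) (hArank 0 0) (hArank 1 0) (hAsum 0)
  obtain ⟨c1, c2, c3, hc, hA1, hA1'⟩ :=
    exists_bloch _ _ (hAherm 0 1) (hArank 0 1) (hArank 1 1) (hAsum 1)
  obtain ⟨b1, b2, b3, hb, hB0, hB0'⟩ :=
    exists_bloch _ _ (hBherm 0 0) (hBrank 0 0) (hBrank 1 0) (hBsum 0)
  obtain ⟨d1, d2, d3, hd, hB1, hB1'⟩ :=
    exists_bloch _ _ (hBherm 0 1) (hBrank 0 1) (hBrank 1 1) (hBsum 1)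
  have hH2 : H = (1 / 2 : ℂ) • 1 + (1 / 8 : ℂ) •
      (blochObs a1 a2 a3 ⊗ₖ blochObs (b1+d1) (b2+d2) (b3+d3)
      + blochObs c1 c2 c3 ⊗ₖ blochObs (b1-d1) (b2-d2) (b3-d3)) := by
    rw [hH, blochObs_add, blochObs_sub]
    have hz : ∀ f : ZMod 2 → Matrix (Fin 2 × Fin 2) (Fin 2 × Fin 2) ℂ, ∑ i, f i = f 0 + f 1 :=
      fun f => Fin.sum_univ_two f
    have h11 : (1 : ZMod 2) + 1 = 0 := by decide
    simp only [hz, add_zero, zero_add, mul_zero, zero_mul, mul_one, h11, one_ne_zero, if_true,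
      if_false, hA0, hA0', hA1, hA1', hB0, hB0', hB1, hB1']
    generalize blochObs a1 a2 a3 = P
    generalize blochObs b1 b2 b3 = Q
    generalize blochObs c1 c2 c3 = R
    generalize blochObs d1 d2 d3 = S
    ext ⟨i, j⟩ ⟨k, l⟩
    have hk : (1 : Matrix (Fin 2 × Fin 2) (Fin 2 × Fin 2) ℂ) (i, j) (k, l)
        = (1 : Matrix (Fin 2) (Fin 2) ℂ) i k * (1 : Matrix (Fin 2) (Fin 2) ℂ) j l := by
      rw [← Matrix.one_kronecker_one]
      rfl
    simp [hk]
    ring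
  set W : ℝ := ((a2*c3-a3*c2)^2 + (a3*c1-a1*c3)^2 + (a1*c2-a2*c1)^2) *
      ((b2*d3-b3*d2)^2 + (b3*d1-b1*d3)^2 + (b1*d2-b2*d1)^2) with hW
  have hW0 : 0 ≤ W := by positivity
  have hW1 : W ≤ 1 := by
    refine mul_le_one₀ (cross_bound _ _ _ _ _ _ ha hc) (by positivity)
      (cross_bound _ _ _ _ _ _ hb hd)
  obtain ⟨w, hw0, hw1, hww⟩ : ∃ w : ℝ, 0 ≤ w ∧ w ≤ 1 ∧ w ^ 2 = W :=
    ⟨√W, Real.sqrt_nonneg _, Real.sqrt_le_one.2 hW1, Real.sq_sqrt hW0⟩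
  have hu2 : √(1 + w) ^ 2 = 1 + w := Real.sq_sqrt (by linarith)
  have hv2 : √(1 - w) ^ 2 = 1 - w := Real.sq_sqrt (by linarith)
  have hsv : √2 / 4 * √(8 * (1 / 2 + √(1 + w) / 4) * (1 - (1 / 2 + √(1 + w) / 4)) - 1)
      = √(1 - w) / 4 := by
    have : 1 - w = 2 * (8 * (1 / 2 + √(1 + w) / 4) * (1 - (1 / 2 + √(1 + w) / 4)) - 1) := by
      linear_combination hu2
    rw [this, Real.sqrt_mul (by norm_num)]
    ring
  refine ⟨1 / 2 + √(1 + w) / 4, ⟨?_, ?_⟩, ?_⟩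
  · have : 1 ≤ √(1 + w) := Real.one_le_sqrt.2 (by linarith)
    linarith
  · have : √(1 + w) ≤ √2 := Real.sqrt_le_sqrt (by linarith)
    linarith
  rw [hsv]
  apply Polynomial.funext
  intro l
  have hdet := det_chsh (8 * l - 4) a1 a2 a3 c1 c2 c3 b1 b2 b3 d1 d2 d3
    (by exact_mod_cast ha) (by exact_mod_cast hc) (by exact_mod_cast hb) (by exact_mod_cast hd)
  have hWc : (w : ℂ) ^ 2 = ((a2*c3-a3*c2)^2 + (a3*c1-a1*c3)^2 + (a1*c2-a2*c1)^2) *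
      ((b2*d3-b3*d2)^2 + (b3*d1-b1*d3)^2 + (b1*d2-b2*d1)^2) := by
    exact_mod_cast hww.trans hW
  rw [← hWc] at hdet
  have hsc : Matrix.scalar (Fin 2 × Fin 2) l - H = (1 / 8 : ℂ) •
     (Matrix.scalar (Fin 2 × Fin 2) (8 * l - 4) -
      (blochObs a1 a2 a3 ⊗ₖ blochObs (b1+d1) (b2+d2) (b3+d3)
      + blochObs c1 c2 c3 ⊗ₖ blochObs (b1-d1) (b2-d2) (b3-d3))) := by
    have hs : ∀ t : ℂ, Matrix.scalar (Fin 2 × Fin 2) t = t • 1 := fun t => by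
      rw [Matrix.smul_one_eq_diagonal]; rfl
    rw [hH2, hs, hs]
    module
  rw [Matrix.eval_charpoly, hsc, Matrix.det_smul, hdet]
  have hu2c : ((√(1 + w) : ℝ) : ℂ) ^ 2 = 1 + w := by exact_mod_cast hu2
  have hv2c : ((√(1 - w) : ℝ) : ℂ) ^ 2 = 1 - w := by exact_mod_cast hv2
  simp only [Polynomial.eval_mul, Polynomial.eval_sub, Polynomial.eval_X, Polynomial.eval_C]
  push_cast
  have e1 : (l - (1 / 2 + ((√(1 + w) : ℝ) : ℂ) / 4)) * (l - (1 - (1 / 2 + ((√(1 + w) : ℝ) : ℂ) / 4)))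
      = (l - 1 / 2) ^ 2 - (1 + w) / 16 := by
    linear_combination -(1 / 16) * hu2c
  have e2 : (l - (1 / 2 + ((√(1 - w) : ℝ) : ℂ) / 4)) * (l - (1 / 2 - ((√(1 - w) : ℝ) : ℂ) / 4))
      = (l - 1 / 2) ^ 2 - (1 - w) / 16 := by
    linear_combination -(1 / 16) * hv2c
  rw [mul_assoc, e1, e2]
  simp
  ring
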